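/- arXiv:1612.07898 — 2 statements merged into one kernel-verified Lean document; each statement's English description precedes it below -/
import Mathlib

section
/- Let R be a commutative ring, h a natural number, and M an h×h matrix over R. Then the characteristic polynomial of the 2h×2h block matrix with blocks (0, M; M, 0) equals the product of the characteristic polynomial of M and the characteristic polynomial of -M. -/
/-!
Conjugating a block matrix by the shear `(1, 0; Z, 1)` makes it block upper triangular as soon as
the graph `{(v, Z v)}` is an invariant submodule. For a matrix `(A, B; B, A)` the diagonal
`{(v, v)}` is invariant: the matrix acts on it as `A + B`, and on the quotient by it as `A - B`.
Take `A = 0`.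
-/

section BlockMatrix

open Matrix

variable {R m n : Type*} [CommRing R] [Fintype m] [DecidableEq m] [Fintype n] [DecidableEq n]

theorem fromBlocks_shear_conj (A : Matrix m m R) (B : Matrix m n R) (C : Matrix n m R)
    (D : Matrix n n R) (Z : Matrix n m R) :
    fromBlocks 1 0 (-Z) 1 * (fromBlocks A B C D * fromBlocks 1 0 Z 1) =
      fromBlocks (A + B * Z) B (C + D * Z - Z * (A + B * Z)) (D - Z * B) := by
  simp [fromBlocks_multiply, sub_eq_neg_add]

theorem charpoly_fromBlocks_shear_conj (A : Matrix m m R) (B : Matrix m n R) (C : Matrix n m R)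
    (D : Matrix n n R) (Z : Matrix n m R) :
    (fromBlocks (A + B * Z) B (C + D * Z - Z * (A + B * Z)) (D - Z * B)).charpoly =
      (fromBlocks A B C D).charpoly := by
  have shear_mul_shear_neg :
      (fromBlocks 1 0 Z 1 : Matrix (m ⊕ n) (m ⊕ n) R) * fromBlocks 1 0 (-Z) 1 = 1 := by
    simp [fromBlocks_multiply]
  rw [← fromBlocks_shear_conj, charpoly_mul_comm, Matrix.mul_assoc, shear_mul_shear_neg,
    Matrix.mul_one]

-- The hypothesis says that the graph `{(v, Z v)}` is invariant under the block matrix.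
theorem charpoly_fromBlocks_of_add_mul_eq {A : Matrix m m R} {B : Matrix m n R}
    {C : Matrix n m R} {D : Matrix n n R} {Z : Matrix n m R}
    (hZ : C + D * Z = Z * (A + B * Z)) :
    (fromBlocks A B C D).charpoly = (A + B * Z).charpoly * (D - Z * B).charpoly := by
  rw [← charpoly_fromBlocks_shear_conj A B C D Z, sub_eq_zero.mpr hZ, charpoly_fromBlocks_zero₂₁]

theorem charpoly_fromBlocks_swap_invariant (A B : Matrix n n R) :
    (fromBlocks A B B A).charpoly = (A + B).charpoly * (A - B).charpoly := by
  have diagonal_invariant : B + A * 1 = 1 * (A + B * 1) := by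
    simp only [Matrix.mul_one, Matrix.one_mul, add_comm]
  simpa only [Matrix.mul_one, Matrix.one_mul] using
    charpoly_fromBlocks_of_add_mul_eq diagonal_invariant

theorem stmt_1_general (M : Matrix n n R) :
    (fromBlocks 0 M M 0).charpoly = M.charpoly * (-M).charpoly := by
  simpa only [zero_add, zero_sub] using charpoly_fromBlocks_swap_invariant 0 M

end BlockMatrix

/-- The characteristic polynomial of the block matrix `fromBlocks 0 M M 0`
equals `charpoly M * charpoly (-M)`. -/
theorem stmt_1 {R : Type*} [CommRing R] (h : ℕ) (M : Matrix (Fin h) (Fin h) R) :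
    (Matrix.fromBlocks (0 : Matrix (Fin h) (Fin h) R) M M 0).charpoly =
      M.charpoly * (-M).charpoly :=
  stmt_1_general M
end

section
/- Let F be a finite field, K a finite field extension of F of even degree, and γ a 2×2 matrix over F whose characteristic polynomial is irreducible over F. Then there are exactly two one-dimensional K-subspaces W of K² with γ_K·W ⊆ W, where γ_K is the matrix over K obtained by applying the inclusion F → K to the entries of γ. Equivalently, the induced action of γ on the projective line ℙ¹(K) has exactly two fixed points. -/
/-!
An invariant line is spanned by an eigenvector. When the roots of the characteristic polynomial
are simple, so are the eigenvalues, hence the invariant lines are exactly the eigenspaces and there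
are as many of them as roots. An irreducible polynomial of degree `d` over `𝔽_q` divides
`X ^ q ^ m - X` whenever `d ∣ m`, so it splits over the extension of degree `m`, and its roots there
are simple because finite fields are perfect.
-/

open Module Polynomial

section InvariantLines

variable {K V : Type*} [Field K] [AddCommGroup V] [Module K V] {f : End K V}

/-- The lines of `V` mapped into themselves by `f`. For `f` invertible these are the fixed points of
the action of `f` on the projective space of `V`. -/
def invariantLines (f : End K V) : Set (Submodule K V) :=
  {W | finrank K W = 1 ∧ W ∈ f.invtSubmodule}

theorem exists_hasEigenvalue_and_le_eigenspace {W : Submodule K V} (hW : W ∈ invariantLines f) :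
    ∃ μ, f.HasEigenvalue μ ∧ W ≤ f.eigenspace μ := by
  obtain ⟨hline, hinv⟩ := hW
  obtain ⟨μ, hμ, -⟩ :=
    LinearMap.existsUnique_eq_smul_id_of_finrank_eq_one hline (f.restrict hinv)
  have hle : W ≤ f.eigenspace μ := fun w hw ↦
    End.mem_eigenspace_iff.2 (congrArg Subtype.val (LinearMap.congr_fun hμ ⟨w, hw⟩))
  have hne : W ≠ ⊥ := by
    rintro rfl
    simp at hline
  exact ⟨μ, ne_bot_of_le_ne_bot hne hle, hle⟩

variable [FiniteDimensional K V]

theorem finrank_eigenspace_eq_one (hf : f.charpoly.roots.Nodup) {μ : K} (hμ : f.HasEigenvalue μ) :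
    finrank K (f.eigenspace μ) = 1 := by
  classical
  refine le_antisymm ?_ (Submodule.one_le_finrank_iff.2 hμ)
  calc finrank K (f.eigenspace μ) ≤ f.charpoly.rootMultiplicity μ := f.finrank_eigenspace_le μ
    _ = f.charpoly.roots.count μ := (count_roots _).symm
    _ ≤ 1 := Multiset.nodup_iff_count_le_one.1 hf μ

theorem invariantLines_eq_image_eigenspace (hf : f.charpoly.roots.Nodup) :
    invariantLines f = f.eigenspace '' {μ | f.HasEigenvalue μ} := by
  ext W
  constructor
  · intro hW
    obtain ⟨μ, hμ, hle⟩ := exists_hasEigenvalue_and_le_eigenspace hW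
    have hfinrank : finrank K W = finrank K (f.eigenspace μ) :=
      hW.1.trans (finrank_eigenspace_eq_one hf hμ).symm
    exact ⟨μ, hμ, (Submodule.eq_of_le_of_finrank_eq hle hfinrank).symm⟩
  · rintro ⟨μ, hμ, rfl⟩
    exact ⟨finrank_eigenspace_eq_one hf hμ, f.eigenspace_mem_invtSubmodule μ⟩

theorem ncard_setOf_hasEigenvalue (hf : f.charpoly.roots.Nodup) :
    {μ | f.HasEigenvalue μ}.ncard = f.charpoly.roots.card := by
  classical
  have hroots : {μ | f.HasEigenvalue μ} = f.charpoly.roots.toFinset := by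
    ext μ
    simp [End.hasEigenvalue_iff_isRoot_charpoly, f.charpoly_monic.ne_zero]
  rw [hroots, Set.ncard_coe_finset, Multiset.toFinset_card_of_nodup hf]

theorem ncard_invariantLines (hf : f.charpoly.roots.Nodup) :
    (invariantLines f).ncard = f.charpoly.roots.card := by
  have hinj : Set.InjOn f.eigenspace {μ | f.HasEigenvalue μ} := f.eigenspaces_iSupIndep.injOn
  rw [invariantLines_eq_image_eigenspace hf, hinj.ncard_image, ncard_setOf_hasEigenvalue hf]

end InvariantLines

theorem splits_map_of_natDegree_dvd_finrank {F K : Type*} [Field F] [Finite F] [Field K]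
    [Algebra F K] [FiniteDimensional F K] {p : F[X]} (hp : Irreducible p)
    (hdvd : p.natDegree ∣ finrank F K) : (p.map (algebraMap F K)).Splits := by
  have : Finite K := Module.finite_of_finite F
  have hp_dvd : p.map (algebraMap F K) ∣ X ^ Nat.card K - X := by
    have h := map_dvd (algebraMap F K) (hp.natDegree_dvd_iff_dvd_X_pow_card_pow_sub_X.1 hdvd)
    simpa [← Module.natCard_eq_pow_finrank] using h
  exact splits_X_pow_nat_card_sub_X.of_dvd
    (FiniteField.X_pow_card_sub_X_ne_zero K Finite.one_lt_card) hp_dvd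

theorem stmt_10_general {F K n : Type*} [Field F] [Finite F] [Field K] [Algebra F K]
    [FiniteDimensional F K] [Fintype n] [DecidableEq n] (hdvd : Fintype.card n ∣ finrank F K)
    (γ : Matrix n n F) (hirr : Irreducible γ.charpoly) :
    {W : Submodule K (n → K) | finrank K W = 1 ∧
      ∀ v ∈ W, (γ.map (algebraMap F K)).mulVec v ∈ W}.ncard = Fintype.card n := by
  have hcharpoly : (γ.map (algebraMap F K)).toLin'.charpoly = γ.charpoly.map (algebraMap F K) := by
    rw [Matrix.charpoly_toLin', Matrix.charpoly_map]
  have hdeg : γ.charpoly.natDegree = Fintype.card n := γ.charpoly_natDegree_eq_dim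
  have hsplits : (γ.charpoly.map (algebraMap F K)).Splits :=
    splits_map_of_natDegree_dvd_finrank hirr (hdeg ▸ hdvd)
  have hnodup : (γ.charpoly.map (algebraMap F K)).roots.Nodup :=
    nodup_roots (PerfectField.separable_of_irreducible hirr).map
  calc (invariantLines (γ.map (algebraMap F K)).toLin').ncard
      = (γ.charpoly.map (algebraMap F K)).roots.card := by
        rw [ncard_invariantLines (hcharpoly ▸ hnodup), hcharpoly]
    _ = Fintype.card n := by rw [← hsplits.natDegree_eq_card_roots, natDegree_map, hdeg]

/-- If `F` is a finite field, `K/F` a finite extension of even degree, and `γ`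
a 2×2 matrix over `F` with irreducible characteristic polynomial, then there are exactly two
one-dimensional `K`-subspaces `W` of `K²` with `γ_K · W ⊆ W`. -/
theorem stmt_10 {F K : Type*} [Field F] [Finite F] [Field K] [Algebra F K]
    [FiniteDimensional F K] (heven : Even (Module.finrank F K))
    (γ : Matrix (Fin 2) (Fin 2) F) (hirr : Irreducible γ.charpoly) :
    {W : Submodule K (Fin 2 → K) | Module.finrank K W = 1 ∧
      ∀ v ∈ W, (γ.map (algebraMap F K)).mulVec v ∈ W}.ncard = 2 := by
  simpa using stmt_10_general (by simpa using heven.two_dvd) γ hirr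
end
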